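/- arXiv:math/0311173 — 3 statements merged into one kernel-verified Lean document; each statement's English description precedes it below -/
import Mathlib

section
/- The group π is perfect: its abelianization is the trivial group, so every homomorphism from π to an abelian group is trivial. -/
/-!
A homomorphism `f` from `π` to an abelian group is determined by the images `X, Y, Z, H` of the
generators. Written additively, these satisfy `pX = qY = aH`, `rZ = cH` and `X + Y + Z = 0`.
Multiplying the last relation by `pqr` gives `(a(p+q)r + cpq) H = 0`, that is, `H = 0`. Hence
`pX = qY = rZ = 0`. Since `X = -(Y + Z)` is also killed by `qr`, which is coprime to `p`, it
vanishes; then `Y = -Z` is killed by the coprime integers `q` and `r`, so `Y = Z = 0`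
(`generators_eq_zero`). Triviality of the abelianization is the case where `f` is the
canonical quotient map.
-/

/-- Relators of the presentation
`⟨x,y,z,h | x^p = h^a, y^q = h^a, z^r = h^c, xyz = 1, h central⟩` of the fundamental group of
the Brieskorn homology sphere `Σ(p,q,r)`; the generators `x, y, z, h` are `0, 1, 2, 3 : Fin 4`. -/
def brieskornRels (p q r : ℕ) (a c : ℤ) : Set (FreeGroup (Fin 4)) :=
  { FreeGroup.of 0 ^ p * (FreeGroup.of 3 ^ a)⁻¹,
    FreeGroup.of 1 ^ q * (FreeGroup.of 3 ^ a)⁻¹,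
    FreeGroup.of 2 ^ r * (FreeGroup.of 3 ^ c)⁻¹,
    FreeGroup.of 0 * FreeGroup.of 1 * FreeGroup.of 2,
    FreeGroup.of 3 * FreeGroup.of 0 * (FreeGroup.of 0 * FreeGroup.of 3)⁻¹,
    FreeGroup.of 3 * FreeGroup.of 1 * (FreeGroup.of 1 * FreeGroup.of 3)⁻¹,
    FreeGroup.of 3 * FreeGroup.of 2 * (FreeGroup.of 2 * FreeGroup.of 3)⁻¹ }

/-- The fundamental group of the Brieskorn homology sphere `Σ(p,q,r)`. -/
abbrev BrieskornGroup (p q r : ℕ) (a c : ℤ) : Type := PresentedGroup (brieskornRels p q r a c)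

namespace BrieskornGroup
variable {p q r : ℕ} {a c : ℤ}
/-- The generator `x`. -/
def x : BrieskornGroup p q r a c := PresentedGroup.of 0
/-- The generator `y`. -/
def y : BrieskornGroup p q r a c := PresentedGroup.of 1
/-- The generator `z`. -/
def z : BrieskornGroup p q r a c := PresentedGroup.of 2
/-- The central generator `h`. -/
def h : BrieskornGroup p q r a c := PresentedGroup.of 3
end BrieskornGroup

/-- The relations of `π`, read additively in an abelian group, force all generators to vanish. -/
theorem generators_eq_zero {M : Type*} [AddCommGroup M] {p q r a c : ℤ}
    (hpq : IsCoprime p q) (hqr : IsCoprime q r) (hpr : IsCoprime p r)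
    (hac : a * (p + q) * r + c * p * q = 1) {X Y Z H : M}
    (hX : p • X = a • H) (hY : q • Y = a • H) (hZ : r • Z = c • H) (hs : X + Y + Z = 0) :
    X = 0 ∧ Y = 0 ∧ Z = 0 ∧ H = 0 := by
  have hH : H = 0 := by
    have key : (a * (p + q) * r + c * p * q) • H = 0 := by
      linear_combination (norm := module) (p * q * r) • hs - (q * r) • hX - (p * r) • hY - (p * q) • hZ
    rwa [hac, one_smul] at key
  subst hH
  rw [smul_zero] at hX hY hZ
  have hX0 : X = 0 := by
    obtain ⟨u, v, huv⟩ := hpq.mul_right hpr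
    have key : (u * p + v * (q * r)) • X = 0 := by
      linear_combination (norm := module) u • hX + (v * q * r) • hs - (v * r) • hY - (v * q) • hZ
    rwa [huv, one_smul] at key
  subst hX0
  have hY0 : Y = 0 := by
    obtain ⟨u, v, huv⟩ := hqr
    have key : (u * q + v * r) • Y = 0 := by
      linear_combination (norm := module) u • hY + (v * r) • hs - v • hZ
    rwa [huv, one_smul] at key
  subst hY0
  exact ⟨rfl, rfl, by simpa using hs, rfl⟩

theorem brieskornGroup_hom_eq_one {p q r : ℕ}
    (hpq : Nat.Coprime p q) (hqr : Nat.Coprime q r) (hpr : Nat.Coprime p r)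
    {a c : ℤ} (hac : a * ((p : ℤ) + q) * r + c * p * q = 1)
    {A : Type*} [CommGroup A] (f : BrieskornGroup p q r a c →* A) : f = 1 := by
  have hrel : ∀ w ∈ brieskornRels p q r a c, f (PresentedGroup.mk _ w) = 1 := fun w hw => by
    rw [PresentedGroup.one_of_mem hw, map_one]
  have hx := hrel (FreeGroup.of 0 ^ p * (FreeGroup.of 3 ^ a)⁻¹) (by simp [brieskornRels])
  have hy := hrel (FreeGroup.of 1 ^ q * (FreeGroup.of 3 ^ a)⁻¹) (by simp [brieskornRels])
  have hz := hrel (FreeGroup.of 2 ^ r * (FreeGroup.of 3 ^ c)⁻¹) (by simp [brieskornRels])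
  have hs := hrel (FreeGroup.of 0 * FreeGroup.of 1 * FreeGroup.of 2) (by simp [brieskornRels])
  simp only [map_mul, map_inv, map_zpow, mul_inv_eq_one, ← zpow_natCast] at hx hy hz hs
  obtain ⟨h0, h1, h2, h3⟩ := generators_eq_zero (M := Additive A)
    (Nat.isCoprime_iff_coprime.2 hpq) (Nat.isCoprime_iff_coprime.2 hqr)
    (Nat.isCoprime_iff_coprime.2 hpr) hac
    (congrArg Additive.ofMul hx) (congrArg Additive.ofMul hy) (congrArg Additive.ofMul hz)
    (congrArg Additive.ofMul hs)
  refine PresentedGroup.ext fun i => ?_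
  fin_cases i
  exacts [h0, h1, h2, h3]

/-- The Brieskorn group `π = π₁(Σ(p,q,r))` is perfect: its abelianization is
trivial, so every homomorphism from `π` to an abelian group is trivial. -/
theorem brieskornGroup_perfect (p q r : ℕ) (hp : 0 < p) (hq : 0 < q) (hr : 0 < r)
    (hpq : Nat.Coprime p q) (hqr : Nat.Coprime q r) (hpr : Nat.Coprime p r)
    (a c : ℤ) (hac : a * ((p : ℤ) + q) * r + c * p * q = 1) :
    Subsingleton (Abelianization (BrieskornGroup p q r a c)) ∧
    ∀ (A : Type*) [CommGroup A] (f : BrieskornGroup p q r a c →* A)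
      (g : BrieskornGroup p q r a c), f g = 1 := by
  refine ⟨⟨fun u v => ?_⟩, fun A _ f g => ?_⟩
  · have triv : ∀ w : Abelianization (BrieskornGroup p q r a c), w = 1 := fun w => by
      obtain ⟨g, rfl⟩ := QuotientGroup.mk_surjective w
      exact DFunLike.congr_fun (brieskornGroup_hom_eq_one hpq hqr hpr hac Abelianization.of) g
    rw [triv u, triv v]
  · rw [brieskornGroup_hom_eq_one hpq hqr hpr hac f, MonoidHom.one_apply]
end

section
/- The abelianization of π_Z is infinite cyclic, generated by the image of the meridian μ; moreover in the abelianization the images of the generators satisfy [x] = a·q·[μ], [y] = a·p·[μ], [h] = p·q·[μ], and the image of the longitude λ is 0. -/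
/-!
The relations make `x ↦ aq, y ↦ ap, h ↦ pq` a homomorphism to `ℤ`, and it sends `μ` to
`a(p+q)r + cpq = 1`. In the other direction, `n ↦ [μ]^n` maps `ℤ` to the abelianization. These maps
are mutually inverse as soon as `[x] = aq[μ]`, `[y] = ap[μ]`, `[h] = pq[μ]`, and these identities
follow, in any abelian group, from `pX = aH`, `qY = aH` and `a(p+q)r + cpq = 1`:
for instance `aq(r(X+Y) + cH) = aqrX + ar(aH) + cq(aH) = (aqr + apr + cpq)X = X`.
-/

/-- Relators of the presentation `⟨x,y,h | x^p = h^a, y^q = h^a, h central⟩` of the fundamental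
group of the complement `Z` of the singular `r`-fiber in `Σ(p,q,r)`;
the generators `x, y, h` are `0, 1, 2 : Fin 3`. -/
def knotRels (p q : ℕ) (a : ℤ) : Set (FreeGroup (Fin 3)) :=
  { FreeGroup.of 0 ^ p * (FreeGroup.of 2 ^ a)⁻¹,
    FreeGroup.of 1 ^ q * (FreeGroup.of 2 ^ a)⁻¹,
    FreeGroup.of 2 * FreeGroup.of 0 * (FreeGroup.of 0 * FreeGroup.of 2)⁻¹,
    FreeGroup.of 2 * FreeGroup.of 1 * (FreeGroup.of 1 * FreeGroup.of 2)⁻¹ }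

/-- The fundamental group `π₁(Z)` of the complement of the singular `r`-fiber
in the Brieskorn sphere `Σ(p,q,r)`. -/
abbrev KnotGroup (p q : ℕ) (a : ℤ) : Type := PresentedGroup (knotRels p q a)

namespace KnotGroup
variable {p q : ℕ} {a : ℤ}
/-- The generator `x`. -/
def x : KnotGroup p q a := PresentedGroup.of 0
/-- The generator `y`. -/
def y : KnotGroup p q a := PresentedGroup.of 1
/-- The central generator `h`. -/
def h : KnotGroup p q a := PresentedGroup.of 2
end KnotGroup

namespace KnotGroup
variable {p q : ℕ} {a : ℤ}
/-- The meridian `μ = (xy)^r · h^c`. -/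
def meridian (r c : ℤ) : KnotGroup p q a := (x * y) ^ r * h ^ c
/-- The longitude `λ = (xy)^{pq} · h^{-(p+q)a}`. -/
def longitude : KnotGroup p q a := (x * y) ^ (p * q) * h ^ (-(((p : ℤ) + q) * a))
end KnotGroup

/-- The linear algebra behind the theorem, in an arbitrary abelian group: `X, Y, H` are multiples of
`r(X+Y) + cH`, and the longitude vanishes. -/
theorem KnotGroup.linear_relations {A : Type*} [AddCommGroup A] {X Y H : A} {p q a r c : ℤ}
    (hX : p • X = a • H) (hY : q • Y = a • H) (hac : a * (p + q) * r + c * p * q = 1) :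
    X = (a * q) • (r • (X + Y) + c • H) ∧ Y = (a * p) • (r • (X + Y) + c • H) ∧
      H = (p * q) • (r • (X + Y) + c • H) ∧ (p * q) • (X + Y) + (-((p + q) * a)) • H = 0 := by
  refine ⟨?_, ?_, ?_, ?_⟩
  · linear_combination (norm := module) (-hac) • X - (a * r) • hY + (a * r + q * c) • hX
  · linear_combination (norm := module) (-hac) • Y - (a * r) • hX + (a * r + p * c) • hY
  · linear_combination (norm := module) (-hac) • H - (q * r) • hX - (p * r) • hY
  · linear_combination (norm := module) q • hX + p • hY

theorem KnotGroup.x_pow (p q : ℕ) (a : ℤ) : (x : KnotGroup p q a) ^ p = h ^ a :=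
  mul_inv_eq_one.mp (PresentedGroup.one_of_mem (rels := knotRels p q a)
    (x := FreeGroup.of 0 ^ p * (FreeGroup.of 2 ^ a)⁻¹) (by simp [knotRels]))

theorem KnotGroup.y_pow (p q : ℕ) (a : ℤ) : (y : KnotGroup p q a) ^ q = h ^ a :=
  mul_inv_eq_one.mp (PresentedGroup.one_of_mem (rels := knotRels p q a)
    (x := FreeGroup.of 1 ^ q * (FreeGroup.of 2 ^ a)⁻¹) (by simp [knotRels]))

/-- The degree of each generator: `x ↦ aq`, `y ↦ ap`, `h ↦ pq`. -/
def KnotGroup.degreeGen (p q : ℕ) (a : ℤ) : Fin 3 → Multiplicative ℤ :=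
  ![.ofAdd (a * q), .ofAdd (a * p), .ofAdd ((p : ℤ) * q)]

theorem KnotGroup.degreeGen_rels (p q : ℕ) (a : ℤ) :
    ∀ w ∈ knotRels p q a, FreeGroup.lift (degreeGen p q a) w = 1 := by
  rintro w (rfl | rfl | rfl | rfl) <;>
    simp only [map_mul, map_pow, map_zpow, map_inv, FreeGroup.lift_apply_of, degreeGen,
      Matrix.cons_val] <;>
    apply Multiplicative.toAdd.injective <;> simp <;> ring

/-- The homomorphism from the abelianization to `ℤ` with `x ↦ aq`, `y ↦ ap`, `h ↦ pq`. -/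
def KnotGroup.degree (p q : ℕ) (a : ℤ) : Abelianization (KnotGroup p q a) →* Multiplicative ℤ :=
  Abelianization.lift (PresentedGroup.toGroup (degreeGen_rels p q a))

theorem KnotGroup.degree_of (p q : ℕ) (a : ℤ) (i : Fin 3) :
    degree p q a (Abelianization.of (PresentedGroup.of i)) = degreeGen p q a i := by
  rw [degree, Abelianization.lift_apply_of, PresentedGroup.toGroup.of]

theorem KnotGroup.degree_meridian (p q : ℕ) (a r c : ℤ)
    (hac : a * ((p : ℤ) + q) * r + c * p * q = 1) :
    degree p q a (Abelianization.of (meridian r c)) = Multiplicative.ofAdd 1 := by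
  simp only [meridian, x, y, h, map_mul, map_zpow, degree_of]
  apply Multiplicative.toAdd.injective
  simp [degreeGen]
  linear_combination hac

/-- The abelianization of `π₁(Z)` is infinite cyclic, generated by the image of
the meridian `μ`; moreover `[x] = aq·[μ]`, `[y] = ap·[μ]`, `[h] = pq·[μ]`, and `[λ] = 0`. -/
theorem knotGroup_abelianization (p q : ℕ) (hp : 0 < p) (hq : 0 < q)
    (hpq : Nat.Coprime p q) (a r c : ℤ) (hac : a * ((p : ℤ) + q) * r + c * p * q = 1) :
    (∃ e : Abelianization (KnotGroup p q a) ≃* Multiplicative ℤ,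
        e (Abelianization.of (KnotGroup.meridian r c)) = Multiplicative.ofAdd 1) ∧
    Abelianization.of (KnotGroup.x : KnotGroup p q a)
      = Abelianization.of (KnotGroup.meridian r c : KnotGroup p q a) ^ (a * q) ∧
    Abelianization.of (KnotGroup.y : KnotGroup p q a)
      = Abelianization.of (KnotGroup.meridian r c : KnotGroup p q a) ^ (a * p) ∧
    Abelianization.of (KnotGroup.h : KnotGroup p q a)
      = Abelianization.of (KnotGroup.meridian r c : KnotGroup p q a) ^ ((p : ℤ) * q) ∧
    Abelianization.of (KnotGroup.longitude : KnotGroup p q a) = 1 := by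
  have hrel := KnotGroup.linear_relations (p := p) (q := q) (a := a) (r := r) (c := c)
    (X := Additive.ofMul (Abelianization.of (KnotGroup.x : KnotGroup p q a)))
    (Y := Additive.ofMul (Abelianization.of (KnotGroup.y : KnotGroup p q a)))
    (H := Additive.ofMul (Abelianization.of (KnotGroup.h : KnotGroup p q a)))
    (by rw [← ofMul_zpow, ← ofMul_zpow, ← map_zpow, ← map_zpow, zpow_natCast, KnotGroup.x_pow])
    (by rw [← ofMul_zpow, ← ofMul_zpow, ← map_zpow, ← map_zpow, zpow_natCast, KnotGroup.y_pow])
    hac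
  simp only [← ofMul_zpow, ← ofMul_mul, ← map_mul, ← map_zpow, ← ofMul_one] at hrel
  obtain ⟨hx, hy, hh, hl⟩ := hrel
  replace hx := Additive.ofMul.injective hx
  replace hy := Additive.ofMul.injective hy
  replace hh := Additive.ofMul.injective hh
  replace hl := Additive.ofMul.injective hl
  rw [map_zpow] at hx hy hh
  refine ⟨⟨(KnotGroup.degree p q a).toMulEquiv
    (zpowersHom _ (Abelianization.of (KnotGroup.meridian r c))) ?_ ?_,
    KnotGroup.degree_meridian p q a r c hac⟩, hx, hy, hh, ?_⟩
  · ext i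
    fin_cases i
    · exact (congrArg (zpowersHom _ (Abelianization.of (KnotGroup.meridian r c)))
      (KnotGroup.degree_of p q a 0)).trans hx.symm
    · exact (congrArg (zpowersHom _ (Abelianization.of (KnotGroup.meridian r c)))
      (KnotGroup.degree_of p q a 1)).trans hy.symm
    · exact (congrArg (zpowersHom _ (Abelianization.of (KnotGroup.meridian r c)))
      (KnotGroup.degree_of p q a 2)).trans hh.symm
  · ext
    simp [KnotGroup.degree_meridian p q a r c hac]
  · rw [KnotGroup.longitude, ← zpow_natCast, Nat.cast_mul]
    exact hl
end

section
/- Let α: π → SU(2) be a nontrivial homomorphism. Then α(h) = I or α(h) = −I; moreover H^0(π; ℂ²_α) = 0 and the complex dimension of H^1(π; ℂ²_α) equals 2 if α(h) = I and equals 0 if α(h) = −I. -/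
open Matrix in
/-- The special unitary group `SU(n)` of `n × n` complex matrices with determinant `1`,
as a subgroup of the unitary group. -/
noncomputable def SU (n : ℕ) : Subgroup (Matrix.unitaryGroup (Fin n) ℂ) where
  carrier := {A | (A : Matrix (Fin n) (Fin n) ℂ).det = 1}
  one_mem' := by simp
  mul_mem' := by
    intro a b ha hb
    show ((a * b : Matrix.unitaryGroup (Fin n) ℂ) : Matrix (Fin n) (Fin n) ℂ).det = 1
    rw [Submonoid.coe_mul, Matrix.det_mul]
    rw [Set.mem_setOf_eq] at ha hb
    rw [ha, hb, mul_one]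
  inv_mem' := by
    intro a ha
    show ((a⁻¹ : Matrix.unitaryGroup (Fin n) ℂ) : Matrix (Fin n) (Fin n) ℂ).det = 1
    rw [Set.mem_setOf_eq] at ha
    have : ((a⁻¹ : Matrix.unitaryGroup (Fin n) ℂ) : Matrix (Fin n) (Fin n) ℂ)
        = star (a : Matrix (Fin n) (Fin n) ℂ) := rfl
    rw [this]
    show (Matrix.conjTranspose _).det = 1
    rw [Matrix.det_conjTranspose, ha, star_one]

/-- The underlying matrix of an element of `SU(n)`. -/
noncomputable abbrev matSU {n : ℕ} (A : SU n) : Matrix (Fin n) (Fin n) ℂ := A.val.val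

/-- The standard representation of a group `G` on `ℂ²`, pulled back along `α : G → SU(2)`:
`g` acts by matrix multiplication by `α(g)`. -/
noncomputable def stdRep {G : Type} [Group G] (α : G →* SU 2) :
    Representation ℂ G (Fin 2 → ℂ) where
  toFun g := Matrix.mulVecLin (matSU (α g))
  map_one' := by
    show Matrix.mulVecLin (matSU (α 1)) = 1
    rw [_root_.map_one]
    exact Matrix.mulVecLin_one
  map_mul' := by
    intro g g'
    show Matrix.mulVecLin (matSU (α (g * g'))) = _
    rw [_root_.map_mul]
    show Matrix.mulVecLin (matSU (α g) * matSU (α g')) = _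
    rw [Matrix.mulVecLin_mul]
    rfl

/-! ### Matrices in `SU(2)` -/

theorem matSU_mul {n : ℕ} (A B : SU n) : matSU (A * B) = matSU A * matSU B := rfl

theorem matSU_one {n : ℕ} : matSU (1 : SU n) = 1 := rfl

theorem matSU_injective {n : ℕ} : Function.Injective (matSU : SU n → _) :=
  fun _ _ hAB => Subtype.ext (Subtype.ext hAB)

theorem matSU_det {n : ℕ} (A : SU n) : (matSU A).det = 1 := A.2

/-- An element of `SU(2)` has the shape `!![u, w; -conj w, conj u]`, because its adjugate is its
conjugate transpose. -/
theorem matSU_two_entries (A : SU 2) :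
    matSU A 1 1 = star (matSU A 0 0) ∧ matSU A 1 0 = -star (matSU A 0 1) := by
  have hstar : star (matSU A) * matSU A = 1 := Matrix.UnitaryGroup.star_mul_self A.1
  have hadj : matSU A * (matSU A).adjugate = 1 := by
    rw [Matrix.mul_adjugate, matSU_det, one_smul]
  have key : star (matSU A) = (matSU A).adjugate := left_inv_eq_right_inv hstar hadj
  rw [Matrix.adjugate_fin_two] at key
  have h00 := congrFun (congrFun key 0) 0
  have h10 := congrFun (congrFun key 1) 0
  simp only [Matrix.star_apply] at h00 h10
  refine ⟨by simpa using h00.symm, ?_⟩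
  rw [h10]
  simp

/-- An element of `SU(2)` other than `1` fixes no nonzero vector: with the entries `u`, `w` of its
first row, `det (A - 1) = |u - 1|² + |w|²`. -/
theorem matSU_eq_one_of_fixed (A : SU 2) (v : Fin 2 → ℂ) (hv : v ≠ 0)
    (hfix : Matrix.mulVec (matSU A) v = v) : A = 1 := by
  have hdet : (matSU A - 1).det = 0 := by
    rw [← Matrix.exists_mulVec_eq_zero_iff]
    exact ⟨v, hv, by rw [Matrix.sub_mulVec, hfix, Matrix.one_mulVec, sub_self]⟩
  obtain ⟨h11, h10⟩ := matSU_two_entries A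
  rw [Matrix.det_fin_two] at hdet
  simp only [Matrix.sub_apply, Matrix.one_apply, h11, h10] at hdet
  have hsum : Complex.normSq (matSU A 0 0 - 1) + Complex.normSq (matSU A 0 1) = 0 := by
    have hC : ((Complex.normSq (matSU A 0 0 - 1) + Complex.normSq (matSU A 0 1) : ℝ) : ℂ) = 0 := by
      push_cast
      rw [Complex.normSq_eq_conj_mul_self, Complex.normSq_eq_conj_mul_self, ← hdet]
      simp
      ring
    exact_mod_cast hC
  have n1 := Complex.normSq_nonneg (matSU A 0 0 - 1)
  have n2 := Complex.normSq_nonneg (matSU A 0 1)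
  have e00 : matSU A 0 0 = 1 := sub_eq_zero.1 (Complex.normSq_eq_zero.1 (by linarith))
  have e01 : matSU A 0 1 = 0 := Complex.normSq_eq_zero.1 (by linarith)
  apply matSU_injective
  rw [matSU_one]
  ext i j
  fin_cases i <;> fin_cases j <;> simp [h11, h10, e00, e01]

/-- The centralizer of a non-scalar `2 × 2` matrix is commutative; the scalar elements of `SU(2)`
are `±1`. -/
theorem matSU_eq_one_or_neg_one (H A B : SU 2) (hA : Commute H A) (hB : Commute H B)
    (hAB : ¬ Commute A B) : matSU H = 1 ∨ matSU H = -1 := by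
  have comm_iff (C D : SU 2) : Commute C D ↔ matSU C * matSU D = matSU D * matSU C :=
    ⟨fun e => congrArg matSU e.eq, fun e => matSU_injective e⟩
  rw [comm_iff] at hA hB hAB
  have hdet := matSU_det H
  rw [Matrix.det_fin_two] at hdet
  generalize matSU H = h at *
  generalize matSU A = m at *
  generalize matSU B = n at *
  have ext_iff (C D : Matrix (Fin 2) (Fin 2) ℂ) : C = D ↔
      C 0 0 = D 0 0 ∧ C 0 1 = D 0 1 ∧ C 1 0 = D 1 0 ∧ C 1 1 = D 1 1 := by
    simp [← Matrix.ext_iff, Fin.forall_fin_two, and_assoc]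
  simp only [ext_iff, Matrix.mul_apply, Fin.sum_univ_two] at hA hB hAB ⊢
  obtain ⟨a1, a2, a3, -⟩ := hA
  obtain ⟨b1, b2, b3, -⟩ := hB
  have scalar : h 0 1 = 0 ∧ h 1 0 = 0 ∧ h 0 0 = h 1 1 := by
    by_contra hne
    apply hAB
    by_cases c1 : h 0 1 = 0
    · by_cases c2 : h 1 0 = 0
      · have c3 : h 0 0 - h 1 1 ≠ 0 := fun e => hne ⟨c1, c2, sub_eq_zero.1 e⟩
        refine ⟨?_, ?_, ?_, ?_⟩ <;> refine mul_left_cancel₀ c3 ?_ <;> grind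
      · refine ⟨?_, ?_, ?_, ?_⟩ <;> refine mul_left_cancel₀ c2 ?_ <;> grind
    · refine ⟨?_, ?_, ?_, ?_⟩ <;> refine mul_left_cancel₀ c1 ?_ <;> grind
  obtain ⟨e01, e10, e00⟩ := scalar
  have hsq : (h 1 1 - 1) * (h 1 1 + 1) = 0 := by
    rw [e01, e00] at hdet
    linear_combination hdet
  rcases mul_eq_zero.1 hsq with e | e
  · left
    have e11 := sub_eq_zero.1 e
    simp [e01, e10, e00, e11]
  · right
    have e11 := eq_neg_of_add_eq_zero_left e
    simp [e01, e10, e00, e11]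

/-! ### The group -/

/-- A commutative quotient of the Brieskorn group is trivial. -/
theorem generators_trivial_of_commute {G : Type*} [Group G] {p q r : ℕ}
    (hpq : Nat.Coprime p q) (hqr : Nat.Coprime q r) (hpr : Nat.Coprime p r)
    {a c : ℤ} (hac : a * ((p : ℤ) + q) * r + c * p * q = 1) {X Y Z H : G}
    (hX : X ^ p = H ^ a) (hY : Y ^ q = H ^ a) (hZ : Z ^ r = H ^ c) (hXYZ : X * Y * Z = 1)
    (hcomm : Commute X Y) : X = 1 ∧ Y = 1 ∧ Z = 1 ∧ H = 1 := by
  have hZ' : Z = (X * Y)⁻¹ := (inv_eq_of_mul_eq_one_right hXYZ).symm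
  -- With `N = pqr`, the three summands of `hac` exhibit `H` as `X ^ N * Y ^ N * Z ^ N`.
  have e1 : H ^ (a * (q * r)) = X ^ (p * q * r) := by
    rw [zpow_mul, ← hX, ← zpow_natCast, ← zpow_mul, ← zpow_natCast]
    congr 1
    push_cast
    ring
  have e2 : H ^ (a * (p * r)) = Y ^ (p * q * r) := by
    rw [zpow_mul, ← hY, ← zpow_natCast, ← zpow_mul, ← zpow_natCast]
    congr 1
    push_cast
    ring
  have e3 : H ^ (c * (p * q)) = Z ^ (p * q * r) := by
    rw [zpow_mul, ← hZ, ← zpow_natCast, ← zpow_mul, ← zpow_natCast]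
    congr 1
    push_cast
    ring
  have hH : H = 1 := by
    have hsplit : H = H ^ (a * (q * r)) * H ^ (a * (p * r)) * H ^ (c * (p * q)) := by
      rw [← zpow_add, ← zpow_add]
      conv_lhs => rw [← zpow_one H, ← hac]
      congr 1
      ring
    rw [e1, e2, e3, ← hcomm.mul_pow, hZ', inv_pow, mul_inv_cancel] at hsplit
    exact hsplit
  rw [hH, one_zpow] at hX hY hZ
  have hXYr : X ^ r * Y ^ r = 1 := by
    rw [← hcomm.mul_pow, ← inv_eq_one, ← inv_pow, ← hZ', hZ]
  have cr : Commute (X ^ r) (Y ^ r) := hcomm.pow_pow r r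
  have hX1 : X = 1 := by
    have h1 : X ^ (r * q) = 1 := by
      have h2 := cr.mul_pow q
      rwa [hXYr, one_pow, ← pow_mul, ← pow_mul, mul_comm r q, pow_mul Y, hY, one_pow, mul_one,
        mul_comm q r, eq_comm] at h2
    have hd := Nat.dvd_gcd (orderOf_dvd_of_pow_eq_one hX) (orderOf_dvd_of_pow_eq_one h1)
    rw [Nat.Coprime.gcd_eq_one (Nat.Coprime.mul_right hpr hpq)] at hd
    exact orderOf_eq_one_iff.1 (Nat.dvd_one.1 hd)
  have hY1 : Y = 1 := by
    have h1 : Y ^ r = 1 := by rwa [hX1, one_pow, one_mul] at hXYr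
    have hd := Nat.dvd_gcd (orderOf_dvd_of_pow_eq_one hY) (orderOf_dvd_of_pow_eq_one h1)
    rw [hqr.gcd_eq_one] at hd
    exact orderOf_eq_one_iff.1 (Nat.dvd_one.1 hd)
  exact ⟨hX1, hY1, by rw [hZ', hX1, hY1]; simp, hH⟩

namespace BrieskornGroup

variable {p q r : ℕ} {a c : ℤ}

theorem x_pow : (x : BrieskornGroup p q r a c) ^ p = h ^ a := by
  have h1 := PresentedGroup.mk_eq_mk_of_mul_inv_mem (rels := brieskornRels p q r a c)
    (x := FreeGroup.of 0 ^ p) (y := FreeGroup.of 3 ^ a) (by simp [brieskornRels])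
  simp only [map_pow, map_zpow] at h1
  exact h1

theorem y_pow : (y : BrieskornGroup p q r a c) ^ q = h ^ a := by
  have h1 := PresentedGroup.mk_eq_mk_of_mul_inv_mem (rels := brieskornRels p q r a c)
    (x := FreeGroup.of 1 ^ q) (y := FreeGroup.of 3 ^ a) (by simp [brieskornRels])
  simp only [map_pow, map_zpow] at h1
  exact h1

theorem z_pow : (z : BrieskornGroup p q r a c) ^ r = h ^ c := by
  have h1 := PresentedGroup.mk_eq_mk_of_mul_inv_mem (rels := brieskornRels p q r a c)
    (x := FreeGroup.of 2 ^ r) (y := FreeGroup.of 3 ^ c) (by simp [brieskornRels])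
  simp only [map_pow, map_zpow] at h1
  exact h1

theorem x_mul_y_mul_z : (x : BrieskornGroup p q r a c) * y * z = 1 := by
  have h1 := PresentedGroup.one_of_mem (rels := brieskornRels p q r a c)
    (x := FreeGroup.of 0 * FreeGroup.of 1 * FreeGroup.of 2) (by simp [brieskornRels])
  simp only [map_mul] at h1
  exact h1

theorem commute_h_x : Commute (h : BrieskornGroup p q r a c) x := by
  have h1 := PresentedGroup.mk_eq_mk_of_mul_inv_mem (rels := brieskornRels p q r a c)
    (x := FreeGroup.of 3 * FreeGroup.of 0) (y := FreeGroup.of 0 * FreeGroup.of 3)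
    (by simp [brieskornRels])
  simp only [map_mul] at h1
  exact h1

theorem commute_h_y : Commute (h : BrieskornGroup p q r a c) y := by
  have h1 := PresentedGroup.mk_eq_mk_of_mul_inv_mem (rels := brieskornRels p q r a c)
    (x := FreeGroup.of 3 * FreeGroup.of 1) (y := FreeGroup.of 1 * FreeGroup.of 3)
    (by simp [brieskornRels])
  simp only [map_mul] at h1
  exact h1

theorem z_eq : (z : BrieskornGroup p q r a c) = (x * y)⁻¹ :=
  (inv_eq_of_mul_eq_one_right x_mul_y_mul_z).symm

theorem subgroup_eq_top (K : Subgroup (BrieskornGroup p q r a c))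
    (hx : x ∈ K) (hy : y ∈ K) (hh : h ∈ K) (g : BrieskornGroup p q r a c) : g ∈ K := by
  refine PresentedGroup.generated_by _ K (fun j => ?_) g
  fin_cases j
  · exact hx
  · exact hy
  · show z ∈ K
    rw [z_eq]
    exact K.inv_mem (K.mul_mem hx hy)
  · exact hh

theorem commute_h (g : BrieskornGroup p q r a c) : Commute h g := by
  have hg := subgroup_eq_top (Subgroup.centralizer {(h : BrieskornGroup p q r a c)})
    (Subgroup.mem_centralizer_singleton_iff.2 commute_h_x.eq.symm)
    (Subgroup.mem_centralizer_singleton_iff.2 commute_h_y.eq.symm)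
    (Subgroup.mem_centralizer_singleton_iff.2 rfl) g
  exact (Subgroup.mem_centralizer_singleton_iff.1 hg).symm

/-- A nontrivial homomorphism from the Brieskorn group has noncommutative image. -/
theorem not_commute_of_nontrivial {G : Type*} [Group G]
    (hpq : Nat.Coprime p q) (hqr : Nat.Coprime q r) (hpr : Nat.Coprime p r)
    (hac : a * ((p : ℤ) + q) * r + c * p * q = 1)
    (α : BrieskornGroup p q r a c →* G) (hnt : ∃ g, α g ≠ 1) : ¬ Commute (α x) (α y) := by
  intro hcomm
  obtain ⟨g, hg⟩ := hnt
  obtain ⟨hX, hY, -, hH⟩ := generators_trivial_of_commute hpq hqr hpr hac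
    (X := α x) (Y := α y) (Z := α z) (H := α h)
    (by rw [← map_pow, x_pow, map_zpow]) (by rw [← map_pow, y_pow, map_zpow])
    (by rw [← map_pow, z_pow, map_zpow])
    (by rw [← map_mul, ← map_mul, x_mul_y_mul_z, map_one]) hcomm
  exact hg (subgroup_eq_top α.ker hX hY hH g)

/-- A homomorphism out of the Brieskorn group that kills `h`. -/
theorem exists_hom {G : Type*} [Group G] (X Y : G) (hX : X ^ p = 1) (hY : Y ^ q = 1)
    (hXY : (X * Y) ^ r = 1) :
    ∃ F : BrieskornGroup p q r a c →* G, F x = X ∧ F y = Y ∧ F h = 1 := by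
  have hrel : ∀ w ∈ brieskornRels p q r a c,
      FreeGroup.lift (![X, Y, (X * Y)⁻¹, 1] : Fin 4 → G) w = 1 := by
    intro w hw
    simp only [brieskornRels, Set.mem_insert_iff, Set.mem_singleton_iff] at hw
    rcases hw with rfl | rfl | rfl | rfl | rfl | rfl | rfl
    · simp [hX]
    · simp [hY]
    · simp [hXY, -mul_inv_rev]
    · simp [-mul_inv_rev]
    · simp
    · simp
    · simp
  exact ⟨PresentedGroup.toGroup hrel, PresentedGroup.toGroup.of hrel,
    PresentedGroup.toGroup.of hrel, PresentedGroup.toGroup.of hrel⟩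

end BrieskornGroup

/-! ### First cohomology -/

section H1

open groupCohomology

/-- When `H⁰` vanishes, the coboundary map identifies `B¹` with the coefficient module. -/
theorem finrank_H1_add_finrank {k G : Type} [Field k] [Group G] (A : Rep.{0} k G)
    [FiniteDimensional k (cocycles₁ A)] (hinv : A.ρ.invariants = ⊥) :
    Module.finrank k (H1 A) + Module.finrank k A = Module.finrank k (cocycles₁ A) := by
  have hsurj : Function.Surjective (H1π A).hom :=
    (ModuleCat.epi_iff_surjective (H1π A)).1 inferInstance
  let d : A →ₗ[k] cocycles₁ A := (d₀₁ A).hom.codRestrict (cocycles₁ A) d₀₁_apply_mem_cocycles₁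
  have hd : Function.Injective d := by
    rw [← LinearMap.ker_eq_bot, LinearMap.ker_codRestrict, d₀₁_ker_eq_invariants, hinv]
  have hker : LinearMap.ker (H1π A).hom = LinearMap.range d := by
    ext f
    rw [LinearMap.mem_ker]
    refine (H1π_eq_zero_iff f).trans ?_
    constructor
    · rintro ⟨v, hv⟩
      exact ⟨v, Subtype.ext hv⟩
    · rintro ⟨v, rfl⟩
      exact ⟨v, rfl⟩
  have hrank := LinearMap.finrank_range_add_finrank_ker (H1π A).hom
  rw [hker, LinearMap.finrank_range_of_inj hd, LinearMap.range_eq_top.2 hsurj, finrank_top] at hrank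
  exact hrank

/-- If a central element acts by `-1`, every cocycle `f` is the coboundary of `-f(h)/2`: compare
`f (h * g)` with `f (g * h)`. -/
theorem finrank_H1_eq_zero_of_central_neg {k G : Type} [Field k] [CharZero k] [Group G]
    (A : Rep.{0} k G) (h : G) (hcent : ∀ g, Commute h g) (hneg : ∀ v, A.ρ h v = -v) :
    Module.finrank k (H1 A) = 0 := by
  have hzero : ∀ ξ : H1 A, ξ = 0 := by
    intro ξ
    induction ξ using H1_induction_on with
    | h f =>
      refine (H1π_eq_zero_iff f).2 ⟨-((2 : k)⁻¹ • f h), ?_⟩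
      funext g
      have h1 := (mem_cocycles₁_iff f).1 f.2 h g
      have h2 := (mem_cocycles₁_iff f).1 f.2 g h
      rw [(hcent g).eq, h2, hneg] at h1
      show A.ρ g (-((2 : k)⁻¹ • f h)) - (-((2 : k)⁻¹ • f h)) = f g
      have h3 : A.ρ g (f h) = f h - (2 : k) • f g := by
        rw [two_smul, eq_sub_iff_add_eq, ← add_assoc, h1]
        abel
      rw [map_neg, map_smul, h3, smul_sub, inv_smul_smul₀ two_ne_zero]
      abel
  have : Subsingleton (H1 A) := ⟨fun ξ η => (hzero ξ).trans (hzero η).symm⟩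
  exact Module.finrank_zero_of_subsingleton

end H1

/-- The standard action of `SU(2)` on the additive group `ℂ²`, written multiplicatively. -/
noncomputable def suAction : SU 2 →* MulAut (Multiplicative (Fin 2 → ℂ)) where
  toFun A :=
    { toFun := fun v => .ofAdd (Matrix.mulVec (matSU A) v.toAdd)
      invFun := fun v => .ofAdd (Matrix.mulVec (matSU A⁻¹) v.toAdd)
      left_inv := fun v => by
        apply Multiplicative.toAdd.injective
        simp only [toAdd_ofAdd, Matrix.mulVec_mulVec]
        rw [← matSU_mul, inv_mul_cancel, matSU_one, Matrix.one_mulVec]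
      right_inv := fun v => by
        apply Multiplicative.toAdd.injective
        simp only [toAdd_ofAdd, Matrix.mulVec_mulVec]
        rw [← matSU_mul, mul_inv_cancel, matSU_one, Matrix.one_mulVec]
      map_mul' := fun v w => by
        rw [toAdd_mul, Matrix.mulVec_add, ofAdd_add] }
  map_one' := by
    ext1 v
    exact congrArg Multiplicative.ofAdd (Matrix.one_mulVec v.toAdd)
  map_mul' A B := by
    ext1 v
    exact congrArg Multiplicative.ofAdd (Matrix.mulVec_mulVec v.toAdd (matSU A) (matSU B)).symm

/-- An affine motion of `ℂ²` whose linear part `A ∈ SU(2)` is not `1` has a fixed point, hence is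
conjugate to `A` by a translation. In particular it has the same order as `A`. -/
theorem affine_pow_eq_one (s : Multiplicative (Fin 2 → ℂ) ⋊[suAction] SU 2) (n : ℕ)
    (hne : s.right ≠ 1) (hpow : s.right ^ n = 1) : s ^ n = 1 := by
  let L : (Fin 2 → ℂ) →ₗ[ℂ] (Fin 2 → ℂ) := LinearMap.id - Matrix.mulVecLin (matSU s.right)
  have hL : Function.Injective L := by
    rw [← LinearMap.ker_eq_bot, LinearMap.ker_eq_bot']
    intro v hv
    by_contra hv0
    exact hne (matSU_eq_one_of_fixed s.right v hv0 (sub_eq_zero.1 hv).symm)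
  obtain ⟨t, ht⟩ := LinearMap.injective_iff_surjective.1 hL s.left.toAdd
  have hconj : s = SemidirectProduct.inl (.ofAdd t) * SemidirectProduct.inr s.right *
      (SemidirectProduct.inl (.ofAdd t))⁻¹ := by
    ext1
    · rw [← ofAdd_toAdd s.left, ← ht]
      rw [← map_inv]
      simp only [SemidirectProduct.mul_left, SemidirectProduct.mul_right,
        SemidirectProduct.left_inl, SemidirectProduct.right_inl, SemidirectProduct.left_inr,
        SemidirectProduct.right_inr, map_one, one_mul, mul_one]
      rw [map_inv]
      exact congrArg Multiplicative.ofAdd (sub_eq_add_neg _ _)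
    · simp
  rw [hconj, conj_pow, ← map_pow, hpow]
  simp

section Cocycles

open groupCohomology BrieskornGroup

variable {p q r : ℕ} {a c : ℤ}

/-- Evaluation of a cocycle at the generators `x` and `y`. -/
noncomputable def evalXY (α : BrieskornGroup p q r a c →* SU 2) :
    cocycles₁ (Rep.of (stdRep α)) →ₗ[ℂ] (Fin 2 → ℂ) × (Fin 2 → ℂ) where
  toFun f := (f x, f y)
  map_add' _ _ := rfl
  map_smul' _ _ := rfl

/-- A cocycle vanishes at `h` when `α(h) = 1` and there are no invariants, and it is then determined
by its values at `x` and `y`. -/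
theorem evalXY_injective (α : BrieskornGroup p q r a c →* SU 2)
    (hinv : (stdRep α).invariants = ⊥) (hh : α h = 1) : Function.Injective (evalXY α) := by
  rw [← LinearMap.ker_eq_bot, LinearMap.ker_eq_bot']
  intro f hf
  have hcoc : ∀ g₁ g₂, f (g₁ * g₂) = stdRep α g₁ (f g₂) + f g₁ := (mem_cocycles₁_iff f).1 f.2
  have fx : f x = 0 := congrArg Prod.fst hf
  have fy : f y = 0 := congrArg Prod.snd hf
  have hone : stdRep α h = 1 := by
    show Matrix.mulVecLin (matSU (α h)) = 1
    rw [hh]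
    exact Matrix.mulVecLin_one
  have fh : f h = 0 := by
    have hmem : (f h : Fin 2 → ℂ) ∈ (stdRep α).invariants := by
      intro g
      have h1 := hcoc h g
      rw [(commute_h g).eq, hcoc g h, hone, Module.End.one_apply, add_comm] at h1
      exact add_left_cancel h1
    rw [hinv] at hmem
    exact hmem
  have f1 : f 1 = 0 := cocycles₁_map_one f
  let K : Subgroup (BrieskornGroup p q r a c) :=
    { carrier := {g | f g = 0}
      one_mem' := f1
      mul_mem' := fun {g₁ g₂} h1 h2 => by
        show f (g₁ * g₂) = 0
        rw [hcoc, show f g₂ = 0 from h2, show f g₁ = 0 from h1, map_zero, add_zero]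
      inv_mem' := fun {g} h1 => by
        show f g⁻¹ = 0
        have h2 := hcoc g⁻¹ g
        rw [inv_mul_cancel, f1, show f g = 0 from h1, map_zero, zero_add] at h2
        exact h2.symm }
  exact cocycles₁_ext fun g => subgroup_eq_top K fx fy fh g

/-- Any values at `x` and `y` extend to a cocycle: the affine motions with linear parts `α(x)`,
`α(y)` and these translation parts satisfy the relations, since by `affine_pow_eq_one` the power
relations only constrain linear parts. -/
theorem evalXY_surjective (α : BrieskornGroup p q r a c →* SU 2) (hh : α h = 1)
    (hncomm : ¬ Commute (α x) (α y)) : Function.Surjective (evalXY α) := by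
  rintro ⟨u, v⟩
  let X : Multiplicative (Fin 2 → ℂ) ⋊[suAction] SU 2 := ⟨.ofAdd u, α x⟩
  let Y : Multiplicative (Fin 2 → ℂ) ⋊[suAction] SU 2 := ⟨.ofAdd v, α y⟩
  have hX : X ^ p = 1 := by
    refine affine_pow_eq_one X p (fun e => hncomm ?_) ?_
    · rw [show α x = 1 from e]
      exact Commute.one_left _
    · show α x ^ p = 1
      rw [← map_pow, x_pow, map_zpow, hh, one_zpow]
  have hY : Y ^ q = 1 := by
    refine affine_pow_eq_one Y q (fun e => hncomm ?_) ?_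
    · rw [show α y = 1 from e]
      exact Commute.one_right _
    · show α y ^ q = 1
      rw [← map_pow, y_pow, map_zpow, hh, one_zpow]
  have hXY : (X * Y) ^ r = 1 := by
    refine affine_pow_eq_one (X * Y) r (fun e => hncomm ?_) ?_
    · have e' : α x * α y = 1 := e
      rw [eq_inv_of_mul_eq_one_left e']
      exact (Commute.refl _).inv_left
    · show (α x * α y) ^ r = 1
      rw [← map_mul, ← inv_eq_one, ← inv_pow, ← map_inv, ← z_eq, ← map_pow, z_pow, map_zpow, hh,
        one_zpow]
  obtain ⟨F, Fx, Fy, Fh⟩ := exists_hom (a := a) (c := c) X Y hX hY hXY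
  have Fright : ∀ g, (F g).right = α g := fun g =>
    subgroup_eq_top (MonoidHom.eqLocus (SemidirectProduct.rightHom.comp F) α)
      (congrArg SemidirectProduct.right Fx) (congrArg SemidirectProduct.right Fy)
      ((congrArg SemidirectProduct.right Fh).trans hh.symm) g
  refine ⟨⟨fun g => (F g).left.toAdd, (mem_cocycles₁_iff _).2 fun g₁ g₂ => ?_⟩, ?_⟩
  · show (F (g₁ * g₂)).left.toAdd =
      Matrix.mulVec (matSU (α g₁)) (F g₂).left.toAdd + (F g₁).left.toAdd
    rw [map_mul, SemidirectProduct.mul_left, Fright, toAdd_mul, add_comm]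
    rfl
  · show ((F x).left.toAdd, (F y).left.toAdd) = (u, v)
    rw [Fx, Fy]
    rfl

end Cocycles

/-- For a nontrivial `α : π₁(Σ(p,q,r)) → SU(2)`, `α(h) = ±I`; moreover
`H⁰(π; ℂ²_α) = 0` and `dim_ℂ H¹(π; ℂ²_α)` is `2` if `α(h) = I` and `0` if `α(h) = -I`. -/
theorem SU2_rep_cohomology (p q r : ℕ) (hp : 0 < p) (hq : 0 < q) (hr : 0 < r)
    (hpq : Nat.Coprime p q) (hqr : Nat.Coprime q r) (hpr : Nat.Coprime p r)
    (a c : ℤ) (hac : a * ((p : ℤ) + q) * r + c * p * q = 1)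
    (α : BrieskornGroup p q r a c →* SU 2) (hnt : ∃ g, α g ≠ 1) :
    (matSU (α BrieskornGroup.h) = 1 ∨ matSU (α BrieskornGroup.h) = -1) ∧
    (stdRep α).invariants = ⊥ ∧
    (matSU (α BrieskornGroup.h) = 1 →
      Module.finrank ℂ (groupCohomology.H1 (Rep.of (stdRep α))) = 2) ∧
    (matSU (α BrieskornGroup.h) = -1 →
      Module.finrank ℂ (groupCohomology.H1 (Rep.of (stdRep α))) = 0) := by
  have hncomm := BrieskornGroup.not_commute_of_nontrivial hpq hqr hpr hac α hnt
  have hinv : (stdRep α).invariants = ⊥ := by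
    rw [eq_bot_iff]
    intro v hv
    by_contra hv0
    obtain ⟨g, hg⟩ := hnt
    exact hg (matSU_eq_one_of_fixed (α g) v hv0 (hv g))
  refine ⟨?_, hinv, fun hh => ?_, fun hh => ?_⟩
  · exact matSU_eq_one_or_neg_one _ _ _ (BrieskornGroup.commute_h_x.map α)
      (BrieskornGroup.commute_h_y.map α) hncomm
  · have hh1 : α BrieskornGroup.h = 1 := matSU_injective hh
    let e := LinearEquiv.ofBijective (evalXY α)
      ⟨evalXY_injective α hinv hh1, evalXY_surjective α hh1 hncomm⟩
    have : FiniteDimensional ℂ (groupCohomology.cocycles₁ (Rep.of (stdRep α))) :=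
      e.symm.finiteDimensional
    have h1 := finrank_H1_add_finrank (Rep.of (stdRep α)) hinv
    rw [e.finrank_eq, Module.finrank_prod, Module.finrank_fin_fun] at h1
    omega
  · refine finrank_H1_eq_zero_of_central_neg _ BrieskornGroup.h BrieskornGroup.commute_h ?_
    intro v
    show Matrix.mulVec (matSU (α BrieskornGroup.h)) v = -v
    rw [hh, Matrix.neg_mulVec, Matrix.one_mulVec]
end
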